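/- Let α = (√5 − 1)/2 be the golden mean. Then the series Σ_{n≥1} 1/(D(1)·D(2)···D(n)) diverges to +∞; that is, the power series solution Σ_{k≥0} x^k/(D(1)···D(k)) of the linearized Master equation diverges at its radius of convergence (at x equal to that radius, and hence at every point of the circle of convergence, since the coefficients are positive). -/

import Mathlib

open Filter

/-- `D α k = 2(1 - cos(2πkα))`, the small denominator of the Master recursion. -/
noncomputable def D (α : ℝ) (k : ℕ) : ℝ := 2 * (1 - Real.cos (2 * Real.pi * k * α))

lemma D_eq_sin_sq (α : ℝ) (k : ℕ) : D α k = 4 * Real.sin (Real.pi * k * α) ^ 2 := by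
  have h : 2 * Real.pi * k * α = 2 * (Real.pi * k * α) := by ring
  rw [D, h, Real.cos_two_mul, Real.sin_sq]
  ring

lemma D_pos_of_irrational {α : ℝ} (hα : Irrational α) {k : ℕ} (hk : 1 ≤ k) : 0 < D α k := by
  have h : Real.sin (Real.pi * k * α) ≠ 0 := by
    intro h
    obtain ⟨m, hm⟩ := Real.sin_eq_zero_iff.mp h
    refine (hα.natCast_mul (m := k) (by omega)).ne_int m ?_
    have : Real.pi * (k * α) = Real.pi * m := by linarith
    exact mul_left_cancel₀ Real.pi_ne_zero this
  rw [D_eq_sin_sq]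
  positivity

/-- The product of `D r j` over a period of a rational `r` is the square of its denominator. -/
lemma prod_D_rat (r : ℚ) : ∏ j ∈ Finset.Ico 1 r.den, D r j = (r.den : ℝ) ^ 2 := by
  obtain ⟨n, hn⟩ : ∃ n, r.den = n + 1 := ⟨r.den - 1, by have := r.pos; omega⟩
  have hprim := Complex.isPrimitiveRoot_exp_rat r
  rw [hn] at hprim
  have h := congrArg (fun z : ℂ => ‖z‖ ^ 2) hprim.prod_one_sub_pow_eq_order
  simp only [norm_prod, ← Finset.prod_pow] at h
  rw [hn, Finset.prod_Ico_eq_prod_range]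
  calc _ = ∏ k ∈ Finset.range n, ‖1 - Complex.exp (2 * Real.pi * Complex.I * r) ^ (k + 1)‖ ^ 2 := by
        refine Finset.prod_congr (by simp) fun k _ => ?_
        have he : Complex.exp (2 * Real.pi * Complex.I * r) ^ (k + 1)
            = Complex.exp (Complex.I * ((2 * (Real.pi * ((1 + k : ℕ) : ℝ) * r) : ℝ) : ℂ)) := by
          rw [← Complex.exp_nat_mul]
          push_cast
          ring_nf
        rw [he, norm_sub_rev, Complex.norm_exp_I_mul_ofReal_sub_one, D_eq_sin_sq,
          mul_div_cancel_left₀ _ two_ne_zero, Real.norm_eq_abs, sq_abs]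
        ring
    _ = _ := by
        rw [h]
        norm_cast

lemma D_rat_reflect (r : ℚ) {j : ℕ} (hj : j ≤ r.den) : D r (r.den - j) = D r j := by
  have hr : (r : ℝ) * r.den = r.num := by exact_mod_cast r.mul_den_eq_num
  have : 2 * Real.pi * ((r.den - j : ℕ) : ℝ) * r = r.num * (2 * Real.pi) - 2 * Real.pi * j * r := by
    rw [Nat.cast_sub hj, ← hr]
    ring
  rw [D, D, this, Real.cos_int_mul_two_pi_sub]

lemma sum_Ico_one_reflect (q : ℕ) (f : ℕ → ℝ) :
    ∑ j ∈ Finset.Ico 1 q, f (q - j) = ∑ j ∈ Finset.Ico 1 q, f j := by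
  refine Finset.sum_nbij' (fun j => q - j) (fun j => q - j) ?_ ?_ ?_ ?_ ?_ <;>
    simp only [Finset.mem_Ico] <;> intros <;> first | omega | trivial

lemma sum_sum_Icc_eq_sum_weighted (q : ℕ) (f : ℕ → ℝ) :
    ∑ n ∈ Finset.range q, ∑ j ∈ Finset.Icc 1 n, f j = ∑ j ∈ Finset.Ico 1 q, ((q : ℝ) - j) * f j := by
  rw [Finset.sum_comm' (s' := fun j => Finset.Ico j q) (t' := Finset.Ico 1 q)]
  · refine Finset.sum_congr rfl fun j hj => ?_
    rw [Finset.sum_const, Nat.card_Ico, nsmul_eq_mul,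
      Nat.cast_sub (Finset.mem_Ico.mp hj).2.le]
  · intro n j
    simp only [Finset.mem_range, Finset.mem_Icc, Finset.mem_Ico]
    omega

/-- At a rational, the symmetry `j ↦ q - j` computes the weighted sum of logarithms exactly. -/
lemma sum_weighted_log_D_rat (r : ℚ) :
    ∑ j ∈ Finset.Ico 1 r.den, ((r.den : ℝ) - j) * Real.log (D r j)
      = r.den * Real.log r.den := by
  have hlog : ∑ j ∈ Finset.Ico 1 r.den, Real.log (D r j) = 2 * Real.log r.den := by
    rw [← Real.log_prod, prod_D_rat, Real.log_pow]
    · norm_num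
    · refine Finset.prod_ne_zero_iff.mp ?_
      rw [prod_D_rat]
      have := r.den_nz
      positivity
  have hrefl := sum_Ico_one_reflect r.den fun j => ((r.den : ℝ) - j) * Real.log (D r j)
  have hsum : ∑ j ∈ Finset.Ico 1 r.den, ((r.den : ℝ) - (r.den - j : ℕ)) * Real.log (D r (r.den - j))
      + ∑ j ∈ Finset.Ico 1 r.den, ((r.den : ℝ) - j) * Real.log (D r j)
      = r.den * (2 * Real.log r.den) := by
    rw [← Finset.sum_add_distrib, ← hlog, Finset.mul_sum]
    refine Finset.sum_congr rfl fun j hj => ?_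
    have hj' := (Finset.mem_Ico.mp hj).2.le
    rw [D_rat_reflect r hj', Nat.cast_sub hj']
    ring
  linarith

/-- The logarithm of `sin²` lies below its linearization, up to replacing `x` by `sin x`. -/
lemma log_sin_add_sq_le {x y : ℝ} (h : 0 < Real.sin (y + x) / Real.sin y) :
    Real.log (4 * Real.sin (y + x) ^ 2)
      ≤ Real.log (4 * Real.sin y ^ 2) + 2 * (Real.cos y / Real.sin y * Real.sin x) := by
  have hy : Real.sin y ≠ 0 := by
    intro h0
    simp [h0] at h
  have hratio : Real.sin (y + x) / Real.sin y
      = Real.cos x + Real.cos y / Real.sin y * Real.sin x := by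
    rw [Real.sin_add]
    field_simp
  have hsplit : 4 * Real.sin (y + x) ^ 2
      = 4 * Real.sin y ^ 2 * (Real.sin (y + x) / Real.sin y) ^ 2 := by
    field_simp
  rw [hsplit, Real.log_mul (by positivity) (by positivity), Real.log_pow]
  have h1 := Real.log_le_sub_one_of_pos h
  have h2 := Real.cos_le_one x
  push_cast
  linarith

lemma abs_sin_sub_self_le (x : ℝ) : |Real.sin x - x| ≤ |x| ^ 3 / 6 := by
  wlog hx : 0 < x generalizing x
  · rcases eq_or_lt_of_le (not_lt.mp hx) with rfl | hneg
    · simp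
    · have := this (-x) (by linarith)
      rwa [Real.sin_neg, abs_neg, neg_sub_neg, abs_sub_comm] at this
  rw [abs_of_pos hx, abs_le]
  have h1 := Real.sin_gt_sub_cube hx
  have h2 := Real.sin_lt hx
  have h3 : 0 < x ^ 3 := by positivity
  constructor <;> linarith

lemma two_div_le_sin_pi_mul_div {q k : ℝ} (h1 : 1 ≤ k) (h2 : k ≤ q - 1) :
    2 / q ≤ Real.sin (Real.pi * (k / q)) := by
  have hq : 0 < q := by linarith
  have half : ∀ t : ℝ, 1 ≤ t → t ≤ q / 2 → 2 / q ≤ Real.sin (Real.pi * (t / q)) := by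
    intro t ht1 ht2
    have hle : t / q ≤ 1 / 2 := by
      rw [div_le_iff₀ hq]
      linarith
    have := Real.mul_le_sin (x := Real.pi * (t / q)) (by positivity)
      (by nlinarith [Real.pi_pos])
    refine le_trans ?_ this
    have hpi := Real.pi_ne_zero
    have : 2 / Real.pi * (Real.pi * (t / q)) = 2 * t / q := by field_simp
    rw [this]
    gcongr
    linarith
  rcases le_total k (q / 2) with h | h
  · exact half k h1 h
  · have := half (q - k) (by linarith) (by linarith)
    rwa [show Real.pi * ((q - k) / q) = Real.pi - Real.pi * (k / q) by field_simp,
      Real.sin_pi_sub] at this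

/-- Multiples of a rational of denominator `q` stay away from the integers by `1 / q`, so a
perturbation smaller than `π / q` does not change the sign of the sine. -/
lemma sin_pi_mul_rat (r : ℚ) {j : ℕ} (hj : j ∈ Finset.Ico 1 r.den) {x : ℝ}
    (hx : |x| < Real.pi / r.den) :
    2 / (r.den : ℝ) ≤ |Real.sin (Real.pi * j * r)| ∧
      0 < Real.sin (Real.pi * j * r + x) / Real.sin (Real.pi * j * r) := by
  have hq : (0 : ℝ) < r.den := by exact_mod_cast r.pos
  have hqz : (0 : ℤ) < r.den := by exact_mod_cast r.pos
  obtain ⟨hj1, hj2⟩ := Finset.mem_Ico.mp hj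
  set m : ℤ := (j * r.num) / r.den
  set k : ℤ := (j * r.num) % r.den
  have hmk : (r.den : ℤ) * m + k = j * r.num := Int.mul_ediv_add_emod _ _
  have hk0 : k ≠ 0 := by
    intro h0
    have hdvd : (r.den : ℤ) ∣ j * r.num := Int.dvd_of_emod_eq_zero h0
    have hcop : IsCoprime (r.den : ℤ) r.num :=
      (Int.isCoprime_iff_nat_coprime.mpr r.reduced).symm
    have hdvd' : r.den ∣ j := by exact_mod_cast hcop.dvd_of_dvd_mul_right hdvd
    exact absurd (Nat.le_of_dvd (by omega) hdvd') (by omega)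
  have hk1 : 1 ≤ k := by
    have : 0 ≤ k := Int.emod_nonneg _ hqz.ne'
    omega
  have hk2 : k ≤ r.den - 1 := by
    have : k < r.den := Int.emod_lt_of_pos _ hqz
    omega
  have hk1' : (1 : ℝ) ≤ k := by exact_mod_cast hk1
  have hk2' : (k : ℝ) ≤ r.den - 1 := by exact_mod_cast hk2
  have hy : Real.pi * j * r = Real.pi * (k / r.den) + m * Real.pi := by
    have hmk' : (r.den : ℝ) * m + k = j * r.num := by exact_mod_cast hmk
    have hr : (r : ℝ) * r.den = r.num := by exact_mod_cast r.mul_den_eq_num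
    rw [← hr] at hmk'
    field_simp
    linarith
  have hsin := two_div_le_sin_pi_mul_div hk1' hk2'
  have hsin0 : 0 < Real.sin (Real.pi * (k / r.den)) := lt_of_lt_of_le (by positivity) hsin
  have hsinx : 0 < Real.sin (Real.pi * (k / r.den) + x) := by
    obtain ⟨hx1, hx2⟩ := abs_lt.mp hx
    have e : Real.pi * (k / r.den) = k * (Real.pi / r.den) := by ring
    have hd : 0 < Real.pi / r.den := by positivity
    have hpi : Real.pi = r.den * (Real.pi / r.den) := by field_simp
    apply Real.sin_pos_of_pos_of_lt_pi
    · rw [e]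
      nlinarith
    · rw [e]
      nlinarith
  have hx' : Real.pi * j * r + x = (Real.pi * (k / r.den) + x) + m * Real.pi := by
    rw [hy]
    ring
  rw [hx', hy, Real.sin_add_int_mul_pi, Real.sin_add_int_mul_pi]
  constructor
  · rw [abs_mul, abs_zpow, abs_neg, abs_one, one_zpow, one_mul, abs_of_pos hsin0]
    exact hsin
  · rw [mul_div_mul_left _ _ (zpow_ne_zero _ (by norm_num))]
    positivity

/-- The weights `(q - j) j` are even and the cotangent is odd under `j ↦ q - j`. -/
lemma sum_weighted_cot_rat (r : ℚ) :
    ∑ j ∈ Finset.Ico 1 r.den, ((r.den : ℝ) - j) * j *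
      (Real.cos (Real.pi * j * r) / Real.sin (Real.pi * j * r)) = 0 := by
  have hrefl := sum_Ico_one_reflect r.den fun j => ((r.den : ℝ) - j) * j *
      (Real.cos (Real.pi * j * r) / Real.sin (Real.pi * j * r))
  have hneg : ∑ j ∈ Finset.Ico 1 r.den, ((r.den : ℝ) - (r.den - j : ℕ)) * (r.den - j : ℕ) *
      (Real.cos (Real.pi * (r.den - j : ℕ) * r) / Real.sin (Real.pi * (r.den - j : ℕ) * r))
      = -∑ j ∈ Finset.Ico 1 r.den, ((r.den : ℝ) - j) * j *
      (Real.cos (Real.pi * j * r) / Real.sin (Real.pi * j * r)) := by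
    rw [← Finset.sum_neg_distrib]
    refine Finset.sum_congr rfl fun j hj => ?_
    have hr : (r : ℝ) * r.den = r.num := by exact_mod_cast r.mul_den_eq_num
    have : Real.pi * ((r.den - j : ℕ) : ℝ) * r = r.num * Real.pi - Real.pi * j * r := by
      rw [Nat.cast_sub (Finset.mem_Ico.mp hj).2.le, ← hr]
      ring
    rw [this, Real.sin_int_mul_pi_sub, Real.cos_int_mul_pi_sub,
      Nat.cast_sub (Finset.mem_Ico.mp hj).2.le, neg_mul_eq_mul_neg,
      mul_div_mul_left _ _ (zpow_ne_zero _ (by norm_num)), div_neg]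
    ring
  linarith

/-- Each term of the weighted sum at `α` differs from the one at a good rational approximation
by a linear term that cancels in the sum and an error of size `O(1 / q)`. -/
lemma weighted_log_D_le {α : ℝ} {r : ℚ} (hr : |α - r| < 1 / (r.den : ℝ) ^ 2) {j : ℕ}
    (hj : j ∈ Finset.Ico 1 r.den) :
    ((r.den : ℝ) - j) * Real.log (D α j) ≤ ((r.den : ℝ) - j) * Real.log (D r j)
      + 2 * Real.pi * (α - r) * (((r.den : ℝ) - j) * j *
        (Real.cos (Real.pi * j * r) / Real.sin (Real.pi * j * r)))
      + Real.pi ^ 3 / r.den := by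
  have hq : (0 : ℝ) < r.den := by exact_mod_cast r.pos
  obtain ⟨hj1, hj2⟩ := Finset.mem_Ico.mp hj
  have hjq : (j : ℝ) < r.den := by exact_mod_cast hj2
  have hj0 : (0 : ℝ) < j := by exact_mod_cast hj1
  set x := Real.pi * j * (α - r) with hxdef
  set y := Real.pi * j * r with hydef
  have hx : |x| < Real.pi / r.den := by
    rw [hxdef, abs_mul, abs_of_pos (by positivity)]
    calc Real.pi * j * |α - r| < Real.pi * r.den * (1 / (r.den : ℝ) ^ 2) := by
          have := Real.pi_pos
          gcongr
      _ = Real.pi / r.den := by field_simp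
  obtain ⟨hsin, hpos⟩ := sin_pi_mul_rat r hj hx
  have hlog := log_sin_add_sq_le hpos
  have hyx : y + x = Real.pi * j * α := by
    rw [hxdef, hydef]
    ring
  rw [hyx, ← D_eq_sin_sq, ← D_eq_sin_sq] at hlog
  have hcot : |Real.cos y / Real.sin y| ≤ r.den / 2 := by
    rw [abs_div, div_le_iff₀ (lt_of_lt_of_le (by positivity) hsin)]
    calc |Real.cos y| ≤ 1 := Real.abs_cos_le_one y
      _ = r.den / 2 * (2 / r.den) := by field_simp
      _ ≤ _ := by gcongr
  have herr : Real.cos y / Real.sin y * (Real.sin x - x)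
      ≤ r.den / 2 * ((Real.pi / r.den) ^ 3 / 6) := by
    refine (le_abs_self _).trans ?_
    rw [abs_mul]
    gcongr
    exact (abs_sin_sub_self_le x).trans (by gcongr)
  have hw : 0 < (r.den : ℝ) - j := by linarith
  have herr' : ((r.den : ℝ) - j) * (2 * (Real.cos y / Real.sin y * (Real.sin x - x)))
      ≤ Real.pi ^ 3 / r.den := by
    calc _ ≤ ((r.den : ℝ) - j) * (2 * (r.den / 2 * ((Real.pi / r.den) ^ 3 / 6))) := by gcongr
      _ ≤ (r.den : ℝ) * (2 * (r.den / 2 * ((Real.pi / r.den) ^ 3 / 6))) := by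
        gcongr
        linarith
      _ = Real.pi ^ 3 / r.den / 6 := by field_simp
      _ ≤ _ := div_le_self (by positivity) (by norm_num)
  have hmul := mul_le_mul_of_nonneg_left hlog hw.le
  have hlin : ((r.den : ℝ) - j) * (2 * (Real.cos y / Real.sin y * Real.sin x))
      = 2 * Real.pi * (α - r) * (((r.den : ℝ) - j) * j * (Real.cos y / Real.sin y))
        + ((r.den : ℝ) - j) * (2 * (Real.cos y / Real.sin y * (Real.sin x - x))) := by
    rw [hxdef]
    ring
  rw [mul_add] at hmul
  linarith

lemma sum_weighted_log_D_le {α : ℝ} {r : ℚ} (hr : |α - r| < 1 / (r.den : ℝ) ^ 2) :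
    ∑ j ∈ Finset.Ico 1 r.den, ((r.den : ℝ) - j) * Real.log (D α j)
      ≤ r.den * Real.log r.den + Real.pi ^ 3 := by
  refine (Finset.sum_le_sum fun j hj => weighted_log_D_le hr hj).trans ?_
  rw [Finset.sum_add_distrib, Finset.sum_add_distrib, ← Finset.mul_sum, sum_weighted_cot_rat,
    sum_weighted_log_D_rat, Finset.sum_const, Nat.card_Ico, nsmul_eq_mul, mul_zero, add_zero]
  have hq : (0 : ℝ) < r.den := by exact_mod_cast r.pos
  have hle : ((r.den - 1 : ℕ) : ℝ) ≤ r.den := by exact_mod_cast Nat.sub_le _ _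
  gcongr
  calc ((r.den - 1 : ℕ) : ℝ) * (Real.pi ^ 3 / r.den) ≤ r.den * (Real.pi ^ 3 / r.den) := by gcongr
    _ = Real.pi ^ 3 := by field_simp

lemma exists_rat_abs_sub_lt_one_div_den_sq_of_le {α : ℝ} (hα : Irrational α) (B : ℕ) :
    ∃ r : ℚ, B ≤ r.den ∧ |α - r| < 1 / (r.den : ℝ) ^ 2 := by
  by_contra! hcon
  refine Real.infinite_rat_abs_sub_lt_one_div_den_sq_of_irrational hα ?_
  have hfin : (Set.image (fun p : ℤ × ℕ => (p.1 / p.2 : ℚ))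
      (Set.Icc (-⌈(|α| + 1) * B⌉) ⌈(|α| + 1) * B⌉ ×ˢ Set.Iic B)).Finite :=
    ((Set.finite_Icc _ _).prod (Set.finite_Iic _)).image _
  refine hfin.subset fun r hr => ?_
  replace hr : |α - r| < 1 / (r.den : ℝ) ^ 2 := hr
  have hB : r.den ≤ B := by
    by_contra! h
    exact absurd (hcon r h.le) (not_le.mpr hr)
  refine ⟨(r.num, r.den), ⟨?_, hB⟩, r.num_div_den⟩
  have hden : (1 : ℝ) ≤ r.den := by exact_mod_cast r.pos
  have hnum : |(r.num : ℝ)| ≤ (|α| + 1) * B := by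
    have hmul : (r : ℝ) * r.den = r.num := by exact_mod_cast r.mul_den_eq_num
    have hlt : |α - r| ≤ 1 := hr.le.trans (div_le_one_of_le₀ (one_le_pow₀ hden) (by positivity))
    have habs : |(r : ℝ)| ≤ |α| + 1 := by
      have := abs_sub_abs_le_abs_sub (r : ℝ) α
      rw [abs_sub_comm] at this
      linarith
    rw [← hmul, abs_mul, Nat.abs_cast]
    gcongr
  obtain ⟨h1, h2⟩ := abs_le.mp hnum
  have hceil := Int.le_ceil ((|α| + 1) * (B : ℝ))
  constructor
  · have : ((-⌈(|α| + 1) * (B : ℝ)⌉ : ℤ) : ℝ) ≤ r.num := by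
      push_cast
      linarith
    exact_mod_cast this
  · have : (r.num : ℝ) ≤ (⌈(|α| + 1) * (B : ℝ)⌉ : ℤ) := h2.trans hceil
    exact_mod_cast this

/-- A positive sequence whose first `q` terms have geometric mean at least `c / q` for
arbitrarily large `q` is not summable. -/
lemma not_summable_of_le_sum_log {a : ℕ → ℝ} (ha : ∀ n, 0 < a n) (C : ℝ)
    (h : ∀ B : ℕ, ∃ q, B ≤ q ∧ -(q * Real.log q + C * q) ≤ ∑ n ∈ Finset.range q, Real.log (a n)) :
    ¬ Summable a := by
  intro hsum
  set L := C + 1 with hL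
  obtain ⟨M, hM⟩ := ((tendsto_sum_nat_add a).eventually
    (gt_mem_nhds (Real.exp_pos (-L)))).exists
  set K := ∑ n ∈ Finset.range M, Real.log (a n)
  have hlim : ∀ᶠ q : ℕ in atTop, K + M * (1 + L) + M * Real.log q < q := by
    have h1 : Tendsto (fun q : ℕ => (K + M * (1 + L)) * (q : ℝ)⁻¹ + M * (Real.log q / q)) atTop
        (nhds ((K + M * (1 + L)) * 0 + M * 0)) := by
      refine (tendsto_inv_atTop_nhds_zero_nat.const_mul _).add (Tendsto.const_mul _ ?_)
      exact (Real.isLittleO_log_id_atTop.tendsto_div_nhds_zero).comp tendsto_natCast_atTop_atTop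
    rw [mul_zero, mul_zero, add_zero] at h1
    filter_upwards [h1.eventually (gt_mem_nhds zero_lt_one), eventually_gt_atTop 0] with q hq hq0
    have hq0' : (0 : ℝ) < q := by exact_mod_cast hq0
    have := mul_lt_mul_of_pos_right hq hq0'
    field_simp at this
    linarith
  obtain ⟨B, hB⟩ := eventually_atTop.mp hlim
  obtain ⟨q, hq, hle⟩ := h (max (B + 1) M)
  have hqB := hB q (by omega)
  have hqM : M ≤ q := by omega
  have hq0 : (0 : ℝ) < q := by exact_mod_cast (by omega : 0 < q)
  set l := q * Real.exp L with hl
  have hl0 : 0 < l := by positivity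
  have hterm : ∀ n, Real.log (a n) ≤ l * a n - (1 + Real.log q + L) := by
    intro n
    have h1 := Real.log_le_sub_one_of_pos (mul_pos hl0 (ha n))
    rw [Real.log_mul hl0.ne' (ha n).ne', hl, Real.log_mul hq0.ne' (Real.exp_pos L).ne',
      Real.log_exp] at h1
    linarith
  have hsplit : ∑ n ∈ Finset.range q, Real.log (a n)
      = K + ∑ i ∈ Finset.range (q - M), Real.log (a (i + M)) := by
    obtain ⟨d, rfl⟩ := Nat.exists_eq_add_of_le hqM
    rw [Finset.sum_range_add, Nat.add_sub_cancel_left]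
    simp only [add_comm M, K]
  have htail : ∑ i ∈ Finset.range (q - M), a (i + M) ≤ Real.exp (-L) :=
    (((summable_nat_add_iff M).mpr hsum).sum_le_tsum _ fun i _ => (ha _).le).trans hM.le
  have hbound : ∑ i ∈ Finset.range (q - M), Real.log (a (i + M))
      ≤ q - (q - M) * (1 + Real.log q + L) := by
    calc _ ≤ ∑ i ∈ Finset.range (q - M), (l * a (i + M) - (1 + Real.log q + L)) :=
          Finset.sum_le_sum fun i _ => hterm _
      _ = l * ∑ i ∈ Finset.range (q - M), a (i + M) - (q - M) * (1 + Real.log q + L) := by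
          rw [Finset.sum_sub_distrib, ← Finset.mul_sum, Finset.sum_const, Finset.card_range,
            nsmul_eq_mul, Nat.cast_sub hqM]
      _ ≤ l * Real.exp (-L) - (q - M) * (1 + Real.log q + L) := by gcongr
      _ = _ := by rw [hl, mul_assoc, ← Real.exp_add, add_neg_cancel, Real.exp_zero, mul_one]
  rw [hsplit] at hle
  rw [hL] at hbound hqB
  nlinarith

lemma prod_D_pos {α : ℝ} (hα : Irrational α) (n : ℕ) : 0 < ∏ j ∈ Finset.Icc 1 n, D α j :=
  Finset.prod_pos fun _ hj => D_pos_of_irrational hα (Finset.mem_Icc.mp hj).1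

lemma not_summable_one_div_prod_D {α : ℝ} (hα : Irrational α) :
    ¬ Summable fun n : ℕ => 1 / ∏ j ∈ Finset.Icc 1 n, D α j := by
  refine not_summable_of_le_sum_log (fun n => one_div_pos.mpr (prod_D_pos hα n))
    (Real.pi ^ 3) fun B => ?_
  obtain ⟨r, hB, hr⟩ := exists_rat_abs_sub_lt_one_div_den_sq_of_le hα B
  refine ⟨r.den, hB, ?_⟩
  have hlog : ∀ n : ℕ, Real.log (1 / ∏ j ∈ Finset.Icc 1 n, D α j)
      = -∑ j ∈ Finset.Icc 1 n, Real.log (D α j) := by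
    intro n
    rw [one_div, Real.log_inv, Real.log_prod]
    exact fun j hj => (D_pos_of_irrational hα (Finset.mem_Icc.mp hj).1).ne'
  simp only [hlog]
  rw [Finset.sum_neg_distrib, sum_sum_Icc_eq_sum_weighted, neg_le_neg_iff]
  refine (sum_weighted_log_D_le hr).trans ?_
  gcongr
  exact le_mul_of_one_le_right (by positivity) (by exact_mod_cast r.pos)

/-- for the golden mean `α = (√5 - 1)/2`, the series
`Σ_{n≥1} 1/(D(1)⋯D(n))` diverges to `+∞`; hence the power series
`Σ_{k≥0} x^k/(D(1)⋯D(k))` (the linear solution, whose radius of convergence is 1)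
diverges at its radius of convergence, and — since its coefficients are positive —
at every point of the circle of convergence `‖x‖ = 1`. -/
theorem stmt14 (α : ℝ) (hα : α = (Real.sqrt 5 - 1) / 2) :
    Tendsto (fun N : ℕ => ∑ n ∈ Finset.Icc 1 N, 1 / ∏ j ∈ Finset.Icc 1 n, D α j)
      atTop atTop ∧
    ∀ x : ℂ, ‖x‖ = 1 →
      ¬ Summable fun k : ℕ => x ^ k / ∏ j ∈ Finset.Icc 1 k, (D α j : ℂ) := by
  have hirr : Irrational α := by
    have h : α = -Real.goldenConj := by
      rw [hα, Real.goldenConj]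
      ring
    exact h ▸ Real.goldenConj_irrational.neg
  have hns := not_summable_one_div_prod_D hirr
  constructor
  · have h := (not_summable_iff_tendsto_nat_atTop_of_nonneg
      fun n => (one_div_pos.mpr (prod_D_pos hirr n)).le).mp hns
    have h' := tendsto_atTop_add_const_right atTop (-1) (h.comp (tendsto_add_atTop_nat 1))
    refine h'.congr fun N => ?_
    rw [Function.comp_apply, Finset.range_eq_Ico, Finset.sum_eq_sum_Ico_succ_bot (by omega)]
    simp [Finset.Ico_add_one_right_eq_Icc]
  · intro x hx hsum
    refine hns (hsum.norm.congr fun k => ?_)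
    rw [norm_div, norm_pow, hx, one_pow, ← Complex.ofReal_prod, Complex.norm_real,
      Real.norm_of_nonneg (prod_D_pos hirr k).le]
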